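/- Let V be a finite-dimensional vector space over 𝕂 (𝕂 = ℝ or ℂ) equipped with its unique norm topology, and let f and g be continuous subnorms on V. Then f and g are equivalent: there exist positive constants μ > 0 and ν > 0 such that μ·f(a) ≤ g(a) ≤ ν·f(a) for all a ∈ V. -/

import Mathlib

/-!
The quotient `f / g` is continuous on the unit sphere, where `g` does not vanish, and the sphere is
compact because `V` is finite-dimensional; so `f / g` is bounded there. Both functions scale by
`‖α‖`, hence the bound `f ≤ c * g` extends to all of `V`. Exchanging `f` and `g` gives the other
inequality.
-/

/-- A continuous absolutely homogeneous function is dominated by a multiple of any continuous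
subnorm. -/
theorem exists_subnorm_le_mul
    {𝕂 : Type*} [RCLike 𝕂] {V : Type*} [NormedAddCommGroup V] [NormedSpace 𝕂 V]
    [FiniteDimensional 𝕂 V] (f g : V → ℝ)
    (hf_smul : ∀ (α : 𝕂) (a : V), f (α • a) = ‖α‖ * f a)
    (hf_cont : Continuous f)
    (hg_pos : ∀ a : V, a ≠ 0 → 0 < g a)
    (hg_smul : ∀ (α : 𝕂) (a : V), g (α • a) = ‖α‖ * g a)
    (hg_cont : Continuous g) :
    ∃ c : ℝ, 0 < c ∧ ∀ a : V, f a ≤ c * g a := by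
  have : ProperSpace V := FiniteDimensional.proper_rclike 𝕂 V
  have hne : ∀ x ∈ Metric.sphere (0 : V) 1, x ≠ 0 := fun x hx =>
    ne_zero_of_mem_unit_sphere ⟨x, hx⟩
  obtain ⟨C, hC⟩ := (isCompact_sphere (0 : V) 1).exists_bound_of_continuousOn
    (f := fun x => f x / g x)
    (hf_cont.continuousOn.div hg_cont.continuousOn fun x hx => (hg_pos x (hne x hx)).ne')
  -- `C` need not be positive when `V` is trivial and the sphere is empty.
  refine ⟨max C 1, by positivity, fun a => ?_⟩
  rcases eq_or_ne a 0 with rfl | ha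
  · have hf0 : f 0 = 0 := by simpa using hf_smul 0 0
    have hg0 : g 0 = 0 := by simpa using hg_smul 0 0
    simp [hf0, hg0]
  · set α : 𝕂 := ((‖a‖⁻¹ : ℝ) : 𝕂) with hα
    have hα_norm : ‖α‖ = ‖a‖⁻¹ := by simp [hα]
    have hα_pos : 0 < ‖α‖ := by rw [hα_norm]; exact inv_pos.mpr (norm_pos_iff.mpr ha)
    have hmem : α • a ∈ Metric.sphere (0 : V) 1 := by
      rw [mem_sphere_zero_iff_norm, norm_smul, hα_norm, inv_mul_cancel₀ (norm_ne_zero_iff.mpr ha)]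
    have hquot : f (α • a) / g (α • a) ≤ max C 1 :=
      (le_abs_self _).trans ((hC _ hmem).trans (le_max_left _ _))
    rw [hf_smul, hg_smul, mul_div_mul_left _ _ hα_pos.ne', div_le_iff₀ (hg_pos a ha)] at hquot
    exact hquot


/-- Any two continuous subnorms `f`, `g` on a finite-dimensional vector space over `𝕂`
(`𝕂 = ℝ` or `ℂ`) are equivalent: there are `μ > 0`, `ν > 0` with
`μ * f a ≤ g a ≤ ν * f a` for all `a`. -/
theorem continuous_subnorms_equivalent
    {𝕂 : Type*} [RCLike 𝕂] {V : Type*} [NormedAddCommGroup V] [NormedSpace 𝕂 V]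
    [FiniteDimensional 𝕂 V] (f g : V → ℝ)
    (hf_pos : ∀ a : V, a ≠ 0 → 0 < f a)
    (hf_smul : ∀ (α : 𝕂) (a : V), f (α • a) = ‖α‖ * f a)
    (hf_cont : Continuous f)
    (hg_pos : ∀ a : V, a ≠ 0 → 0 < g a)
    (hg_smul : ∀ (α : 𝕂) (a : V), g (α • a) = ‖α‖ * g a)
    (hg_cont : Continuous g) :
    ∃ μ ν : ℝ, 0 < μ ∧ 0 < ν ∧ ∀ a : V, μ * f a ≤ g a ∧ g a ≤ ν * f a := by
  obtain ⟨c, hc, hfg⟩ := exists_subnorm_le_mul f g hf_smul hf_cont hg_pos hg_smul hg_cont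
  obtain ⟨d, hd, hgf⟩ := exists_subnorm_le_mul g f hg_smul hg_cont hf_pos hf_smul hf_cont
  refine ⟨c⁻¹, d, inv_pos.mpr hc, hd, fun a => ⟨?_, hgf a⟩⟩
  rw [inv_mul_le_iff₀ hc]
  exact hfg a
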